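/- Let P and Q be Borel probability measures on ℝ^d with identical mixed moments of all orders, and suppose there exist linearly independent u_1,…,u_d such that each π_{u_j}(P) satisfies Carleman's condition. Then P = Q. -/

import Mathlib

open MeasureTheory Filter
open scoped InnerProductSpace ENNReal Topology BigOperators

/-- Weak convergence of a sequence of measures: convergence of integrals of all
bounded continuous functions. -/
def WeakTendsto {E : Type*} [MeasurableSpace E] [TopologicalSpace E]
    (μ : ℕ → Measure E) (ν : Measure E) : Prop :=
  ∀ f : BoundedContinuousFunction E ℝ,
    Tendsto (fun n => ∫ x, f x ∂(μ n)) atTop (𝓝 (∫ x, f x ∂ν))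

/-- Carleman's condition for a measure on ℝ: the series of reciprocal (2m)-th
roots of the even absolute moments diverges. -/
def Carleman (ν : Measure ℝ) : Prop :=
  ¬ Summable (fun m : ℕ =>
    (∫ t, |t| ^ (2 * (m + 1)) ∂ν) ^ (-(1 / (2 * (m + 1) : ℝ))))

/-!
Put `M n = ‖y_k ^ n‖` in `L²(P)`, where `y_k = ⟪u_k, ·⟫`. By Carleman's inequality, Carleman's
condition for the law of `y_k` makes the log-convex sequence `M` satisfy `∑ M n / M (n + 1) = ∞`.
For a weight `w`, the transform `t ↦ ∫ exp(i t y_k) w` is smooth, its derivatives are bounded by a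
multiple of `M n`, and its derivatives at `0` are, up to powers of `i`, the integrals of
`y_k ^ n * w`. If these integrals agree under `P` and `Q`, Bang's form of the Denjoy–Carleman
theorem applied to the difference shows that the transforms agree.

Starting from polynomial weights, for which the hypothesis is equality of mixed moments, the
coordinates are treated one at a time: agreement for the weights `exp(i ∑_{j ∈ S} t_j y_j) * p` for
all polynomials `p` in the `y_j` gives the same for `S ∪ {k}`. So the joint laws of `(y_j)_j`
coincide, and since the `u_j` span, `x ↦ (y_j(x))_j` is injective and the laws on the source agree.
-/

lemma natCast_div_exp_one_le_factorial_rpow_inv {n : ℕ} (hn : n ≠ 0) :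
    n / Real.exp 1 ≤ (n.factorial : ℝ) ^ (n : ℝ)⁻¹ := by
  rw [Real.le_rpow_inv_iff_of_pos (by positivity) (by positivity) (by positivity),
    Real.rpow_natCast, div_pow, ← Real.exp_nat_mul, mul_one, div_le_comm₀ (by positivity)
    (by positivity)]
  exact Real.pow_div_factorial_le_exp _ n.cast_nonneg n

-- AM-GM is applied to the terms `(k + 1) * a k`: with these weights the right-hand sides telescope
-- when summed over `n`.
lemma geom_mean_le_exp_one_div_sq_mul_sum {a : ℕ → ℝ} (ha : ∀ k, 0 ≤ a k) {n : ℕ} (hn : n ≠ 0) :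
    (∏ k ∈ Finset.range n, a k) ^ (n : ℝ)⁻¹ ≤
      Real.exp 1 / n ^ 2 * ∑ k ∈ Finset.range n, ((k : ℝ) + 1) * a k := by
  have hfac : ∏ k ∈ Finset.range n, ((k : ℝ) + 1) = n.factorial := by
    exact_mod_cast Finset.prod_range_add_one_eq_factorial n
  have hprod : 0 ≤ ∏ k ∈ Finset.range n, a k := Finset.prod_nonneg fun k _ => ha k
  have amgm : (n.factorial : ℝ) ^ (n : ℝ)⁻¹ * (∏ k ∈ Finset.range n, a k) ^ (n : ℝ)⁻¹ ≤
      (∑ k ∈ Finset.range n, ((k : ℝ) + 1) * a k) / n := by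
    have h := Real.geom_mean_le_arith_mean (Finset.range n) (fun _ => 1)
      (fun k => ((k : ℝ) + 1) * a k) (fun _ _ => zero_le_one) (by simpa using hn.bot_lt)
      (fun k _ => mul_nonneg (by positivity) (ha k))
    simpa [Finset.prod_mul_distrib, hfac, Real.mul_rpow, hprod] using h
  calc (∏ k ∈ Finset.range n, a k) ^ (n : ℝ)⁻¹
      = Real.exp 1 / n * (n / Real.exp 1 * (∏ k ∈ Finset.range n, a k) ^ (n : ℝ)⁻¹) := by
        field_simp
    _ ≤ Real.exp 1 / n * ((∑ k ∈ Finset.range n, ((k : ℝ) + 1) * a k) / n) := by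
        gcongr
        exact (mul_le_mul_of_nonneg_right (natCast_div_exp_one_le_factorial_rpow_inv hn)
          (Real.rpow_nonneg hprod _)).trans amgm
    _ = Real.exp 1 / n ^ 2 * ∑ k ∈ Finset.range n, ((k : ℝ) + 1) * a k := by ring

lemma sum_range_weighted_averages (a : ℕ → ℝ) (N : ℕ) :
    ∑ n ∈ Finset.range N, (∑ k ∈ Finset.range (n + 1), ((k : ℝ) + 1) * a k) / ((n + 1) * (n + 2)) +
      (∑ k ∈ Finset.range N, ((k : ℝ) + 1) * a k) / (N + 1) = ∑ k ∈ Finset.range N, a k := by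
  induction N with
  | zero => simp
  | succ N ih =>
    rw [Finset.sum_range_succ, Finset.sum_range_succ _ N, Finset.sum_range_succ a, ← ih]
    push_cast
    field_simp
    ring

lemma summable_weighted_averages {a : ℕ → ℝ} (ha : ∀ k, 0 ≤ a k) (hs : Summable a) :
    Summable fun n : ℕ =>
      (∑ k ∈ Finset.range (n + 1), ((k : ℝ) + 1) * a k) / ((n + 1) * (n + 2)) := by
  have hsum (N : ℕ) : 0 ≤ ∑ k ∈ Finset.range N, ((k : ℝ) + 1) * a k :=
    Finset.sum_nonneg fun k _ => mul_nonneg (by positivity) (ha k)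
  refine summable_of_sum_range_le (c := ∑' k, a k)
    (fun n => div_nonneg (hsum _) (by positivity)) fun N => ?_
  calc _ ≤ ∑ k ∈ Finset.range N, a k := by
        rw [← sum_range_weighted_averages a N]
        exact le_add_of_nonneg_right (div_nonneg (hsum N) (by positivity))
    _ ≤ ∑' k, a k := hs.sum_le_tsum _ fun k _ => ha k

-- The qualitative form of Carleman's inequality `∑ (a₁ ⋯ aₙ)^(1/n) ≤ e ∑ aₙ`.
theorem summable_geom_mean {a : ℕ → ℝ} (ha : ∀ k, 0 ≤ a k) (hs : Summable a) :
    Summable fun n : ℕ => (∏ k ∈ Finset.range (n + 1), a k) ^ ((n + 1 : ℕ) : ℝ)⁻¹ := by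
  refine .of_nonneg_of_le (fun n => Real.rpow_nonneg (Finset.prod_nonneg fun k _ => ha k) _)
    (fun n => ?_) ((summable_weighted_averages ha hs).mul_left (2 * Real.exp 1))
  set T := ∑ k ∈ Finset.range (n + 1), ((k : ℝ) + 1) * a k
  have hT : 0 ≤ T := Finset.sum_nonneg fun k _ => mul_nonneg (by positivity) (ha k)
  have hcoeff : 1 / ((n : ℝ) + 1) ^ 2 ≤ 2 / ((n + 1) * (n + 2)) := by
    rw [div_le_div_iff₀ (by positivity) (by positivity)]
    nlinarith [n.cast_nonneg (α := ℝ)]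
  calc _ ≤ Real.exp 1 / ((n + 1 : ℕ) : ℝ) ^ 2 * T :=
        geom_mean_le_exp_one_div_sq_mul_sum ha n.succ_ne_zero
    _ = Real.exp 1 * T * (1 / ((n : ℝ) + 1) ^ 2) := by push_cast; ring
    _ ≤ Real.exp 1 * T * (2 / ((n + 1) * (n + 2))) := by gcongr
    _ = 2 * Real.exp 1 * (T / ((n + 1) * (n + 2))) := by ring

lemma summable_rpow_neg_inv_of_summable_ratio {M : ℕ → ℝ} (hM : ∀ n, 0 < M n)
    (hs : Summable fun n => M n / M (n + 1)) :
    Summable fun n : ℕ => M (n + 1) ^ (-((n + 1 : ℕ) : ℝ)⁻¹) := by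
  have hratio (n : ℕ) : ∏ k ∈ Finset.range n, M k / M (k + 1) = M 0 / M n :=
    Finset.prod_range_induction _ (fun n => M 0 / M n) (div_self (hM 0).ne') n
      fun k _ => (div_mul_div_cancel₀ (hM k).ne').symm
  have hmean := summable_geom_mean (fun n => (div_pos (hM n) (hM (n + 1))).le) hs
  refine .of_nonneg_of_le (fun n => Real.rpow_nonneg (hM _).le _) (fun n => ?_)
    (hmean.mul_left (max 1 (M 0)⁻¹))
  have hM₀ : (M 0)⁻¹ ^ ((n + 1 : ℕ) : ℝ)⁻¹ ≤ max 1 (M 0)⁻¹ :=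
    calc (M 0)⁻¹ ^ ((n + 1 : ℕ) : ℝ)⁻¹ ≤ max 1 (M 0)⁻¹ ^ ((n + 1 : ℕ) : ℝ)⁻¹ :=
          Real.rpow_le_rpow (inv_pos.2 (hM 0)).le (le_max_right _ _) (by positivity)
      _ ≤ max 1 (M 0)⁻¹ :=
          Real.rpow_le_self_of_one_le (le_max_left _ _) (Nat.cast_inv_le_one _)
  calc M (n + 1) ^ (-((n + 1 : ℕ) : ℝ)⁻¹)
      = (M 0)⁻¹ ^ ((n + 1 : ℕ) : ℝ)⁻¹ * (M 0 / M (n + 1)) ^ ((n + 1 : ℕ) : ℝ)⁻¹ := by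
        rw [← Real.mul_rpow (inv_pos.2 (hM 0)).le (div_pos (hM 0) (hM _)).le,
          inv_mul_eq_div, div_div_cancel_left' (hM 0).ne', Real.rpow_neg_eq_inv_rpow]
    _ ≤ max 1 (M 0)⁻¹ * (M 0 / M (n + 1)) ^ ((n + 1 : ℕ) : ℝ)⁻¹ :=
        mul_le_mul_of_nonneg_right hM₀ (Real.rpow_nonneg (div_pos (hM 0) (hM _)).le _)
    _ = _ := by rw [hratio]

/-- The hypothesis on the derivative bounds in the Denjoy–Carleman theorem: a positive
logarithmically convex sequence whose ratios `M n / M (n + 1)` have divergent sum. -/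
structure IsDenjoyCarleman (M : ℕ → ℝ) : Prop where
  pos : ∀ n, 0 < M n
  sq_le_mul : ∀ n, M (n + 1) ^ 2 ≤ M n * M (n + 2)
  not_summable : ¬ Summable fun n => M n / M (n + 1)

namespace IsDenjoyCarleman

variable {M : ℕ → ℝ}

lemma const_mul (hM : IsDenjoyCarleman M) {c : ℝ} (hc : 0 < c) :
    IsDenjoyCarleman fun n => c * M n where
  pos n := mul_pos hc (hM.pos n)
  sq_le_mul n := by
    calc (c * M (n + 1)) ^ 2 = c ^ 2 * M (n + 1) ^ 2 := mul_pow _ _ _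
      _ ≤ c ^ 2 * (M n * M (n + 2)) := by gcongr; exact hM.sq_le_mul n
      _ = c * M n * (c * M (n + 2)) := by ring
  not_summable := by simpa only [mul_div_mul_left _ _ hc.ne'] using hM.not_summable

lemma monotone_ratio (hM : IsDenjoyCarleman M) : Monotone fun n => M (n + 1) / M n :=
  monotone_nat_of_le_succ fun n => by
    rw [div_le_div_iff₀ (hM.pos n) (hM.pos (n + 1)), ← sq, mul_comm]
    exact hM.sq_le_mul n

lemma tendsto_sum_ratio (hM : IsDenjoyCarleman M) (N : ℕ) :
    Tendsto (fun j => ∑ i ∈ Finset.range j, M (N + i) / M (N + i + 1)) atTop atTop := by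
  rw [← not_summable_iff_tendsto_nat_atTop_of_nonneg fun i => (div_pos (hM.pos _) (hM.pos _)).le]
  simpa only [add_comm N] using
    mt (summable_nat_add_iff (f := fun n => M n / M (n + 1)) N).1 hM.not_summable

end IsDenjoyCarleman

section Bang

variable {F : Type*} [NormedAddCommGroup F] {f : ℕ → ℝ → F} {M : ℕ → ℝ} {N : ℕ} {a x₀ x : ℝ}

/-- Bang's smallness condition of level `N` at `x`, for `f n` the `n`-th derivative of a function:
each `‖f n x‖` is at most `exp (n - N)` times the a priori bound `M n`. It is only a
restriction for `n < N`. -/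
def BangBound (f : ℕ → ℝ → F) (M : ℕ → ℝ) (N : ℕ) (x : ℝ) : Prop :=
  ∀ n : ℕ, ‖f n x‖ ≤ Real.exp (n - N) * M n

variable [NormedSpace ℝ F]

lemma BangBound.norm_le_mul_exp (h₀ : BangBound f M N x₀)
    (hf : ∀ n x, HasDerivAt (f n) (f (n + 1) x) x) (hb : ∀ n x, ‖f n x‖ ≤ M n) {μ : ℝ}
    (hμ₀ : 0 ≤ μ) (hμ : ∀ n < N, M (n + 1) ≤ μ * M n) {n : ℕ} (hn : n ≤ N) (hx : x₀ ≤ x) :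
    ‖f n x‖ ≤ Real.exp (n - N) * M n * Real.exp (Real.exp 1 * μ * (x - x₀)) := by
  induction hn using Nat.decreasingInduction generalizing x with
  | self =>
    rw [sub_self, Real.exp_zero, one_mul]
    have hexp : 1 ≤ Real.exp (Real.exp 1 * μ * (x - x₀)) :=
      Real.one_le_exp (mul_nonneg (by positivity) (sub_nonneg.2 hx))
    exact (hb N x).trans (le_mul_of_one_le_right ((norm_nonneg _).trans (hb N x)) hexp)
  | of_succ n hn ih =>
    set B : ℝ → ℝ := fun z =>
      Real.exp (n - N) * M n * Real.exp (Real.exp 1 * μ * (z - x₀)) with hB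
    have hB' (z : ℝ) : HasDerivAt B (B z * (Real.exp 1 * μ)) z := by
      have h := (((hasDerivAt_id z).sub_const x₀).const_mul (Real.exp 1 * μ)).exp.const_mul
        (Real.exp (n - N) * M n)
      exact h.congr_deriv (by simp only [hB, id_eq]; ring)
    refine image_norm_le_of_norm_deriv_right_le_deriv_boundary (a := x₀) (b := x)
      (fun z _ => (hf n z).continuousAt.continuousWithinAt)
      (fun z _ => (hf n z).hasDerivWithinAt) (by simpa [hB] using h₀ n) hB' (fun z hz => ?_)
      ⟨hx, le_rfl⟩
    calc ‖f (n + 1) z‖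
        ≤ Real.exp ((n + 1 : ℕ) - N) * M (n + 1) * Real.exp (Real.exp 1 * μ * (z - x₀)) := ih hz.1
      _ ≤ Real.exp ((n + 1 : ℕ) - N) * (μ * M n) * Real.exp (Real.exp 1 * μ * (z - x₀)) := by
          gcongr; exact hμ n hn
      _ = B z * (Real.exp 1 * μ) := by
          rw [hB, Nat.cast_succ, add_sub_right_comm, Real.exp_add]; ring

-- Lowering the level from `N + 1` to `N` loosens the bound by a factor `e`, which is what
-- `BangBound.norm_le_mul_exp` loses over a step of length `M N / (e * M (N + 1))`.
lemma BangBound.of_succ (h₀ : BangBound f M (N + 1) x₀) (hM : IsDenjoyCarleman M)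
    (hf : ∀ n x, HasDerivAt (f n) (f (n + 1) x) x) (hb : ∀ n x, ‖f n x‖ ≤ M n)
    (hx₀ : x₀ ≤ x) (hx : x - x₀ ≤ Real.exp (-1) * (M N / M (N + 1))) : BangBound f M N x := by
  intro n
  have hMn := hM.pos n
  have hMN := hM.pos N
  have hMN' := hM.pos (N + 1)
  rcases le_or_gt n N with hn | hn
  · set μ := M (N + 1) / M N
    have hμ (k : ℕ) (hk : k < N + 1) : M (k + 1) ≤ μ * M k :=
      (div_le_iff₀ (hM.pos k)).1 (hM.monotone_ratio (Nat.lt_succ_iff.1 hk))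
    have hstep : Real.exp 1 * μ * (x - x₀) ≤ 1 := by
      calc Real.exp 1 * μ * (x - x₀)
          ≤ Real.exp 1 * μ * (Real.exp (-1) * (M N / M (N + 1))) := by gcongr
        _ = 1 := by rw [Real.exp_neg]; simp only [μ]; field_simp
    calc ‖f n x‖ ≤ Real.exp (n - (N + 1 : ℕ)) * M n * Real.exp (Real.exp 1 * μ * (x - x₀)) :=
          h₀.norm_le_mul_exp hf hb (by positivity) hμ (by omega) hx₀
      _ ≤ Real.exp (n - (N + 1 : ℕ)) * M n * Real.exp 1 := by gcongr
      _ = Real.exp (n - N) * M n := by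
          rw [mul_right_comm, ← Real.exp_add]; push_cast; ring_nf
  · have hexp : 1 ≤ Real.exp ((n : ℝ) - N) :=
      Real.one_le_exp (sub_nonneg.2 (Nat.cast_le.2 hn.le))
    exact (hb n x).trans (le_mul_of_one_le_left hMn.le hexp)

lemma bangBound_of_le_add_sum (hM : IsDenjoyCarleman M)
    (hf : ∀ n x, HasDerivAt (f n) (f (n + 1) x) x) (hb : ∀ n x, ‖f n x‖ ≤ M n)
    (ha : ∀ n, f n a = 0) (j : ℕ) (hax : a ≤ x)
    (hx : x ≤ a + Real.exp (-1) * ∑ i ∈ Finset.range j, M (N + i) / M (N + i + 1)) :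
    BangBound f M N x := by
  induction j generalizing N x with
  | zero =>
    obtain rfl : x = a := le_antisymm (by simpa using hx) hax
    intro n
    rw [ha, norm_zero]
    exact mul_nonneg (Real.exp_pos _).le (hM.pos n).le
  | succ j ih =>
    set s := a + Real.exp (-1) * ∑ i ∈ Finset.range j, M (N + 1 + i) / M (N + 1 + i + 1) with hs
    have has : a ≤ s := le_add_of_nonneg_right <| mul_nonneg (Real.exp_pos _).le <|
      Finset.sum_nonneg fun i _ => (div_pos (hM.pos _) (hM.pos _)).le
    have hxs : x ≤ s + Real.exp (-1) * (M N / M (N + 1)) := by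
      rw [Finset.sum_range_succ', mul_add, ← add_assoc] at hx
      simpa only [hs, add_zero, add_comm, add_left_comm] using hx
    have hmin : BangBound f M (N + 1) (min x s) := ih (le_min hax has) (min_le_right _ _)
    refine hmin.of_succ hM hf hb (min_le_left _ _) ?_
    have hpos : 0 ≤ Real.exp (-1) * (M N / M (N + 1)) :=
      mul_nonneg (Real.exp_pos _).le (div_pos (hM.pos _) (hM.pos _)).le
    rcases min_cases x s with ⟨h, _⟩ | ⟨h, _⟩ <;> rw [h] <;> linarith

lemma bangBound_of_ge (hM : IsDenjoyCarleman M)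
    (hf : ∀ n x, HasDerivAt (f n) (f (n + 1) x) x) (hb : ∀ n x, ‖f n x‖ ≤ M n)
    (ha : ∀ n, f n a = 0) (N : ℕ) (hax : a ≤ x) : BangBound f M N x := by
  have hdiv : Tendsto (fun j => a + Real.exp (-1) *
      ∑ i ∈ Finset.range j, M (N + i) / M (N + i + 1)) atTop atTop :=
    tendsto_atTop_add_const_left _ _ ((hM.tendsto_sum_ratio N).const_mul_atTop (Real.exp_pos _))
  obtain ⟨j, hj⟩ := (hdiv.eventually_ge_atTop x).exists
  exact bangBound_of_le_add_sum hM hf hb ha j hax hj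

lemma IsDenjoyCarleman.eq_zero_of_ge (hM : IsDenjoyCarleman M)
    (hf : ∀ n x, HasDerivAt (f n) (f (n + 1) x) x) (hb : ∀ n x, ‖f n x‖ ≤ M n)
    (ha : ∀ n, f n a = 0) (hax : a ≤ x) : f 0 x = 0 := by
  have hlim : Tendsto (fun N : ℕ => Real.exp (((0 : ℕ) : ℝ) - N) * M 0) atTop (𝓝 0) := by
    simpa using (Real.tendsto_exp_neg_atTop_nhds_zero.comp
      tendsto_natCast_atTop_atTop).mul_const (M 0)
  exact norm_le_zero_iff.1 (ge_of_tendsto' hlim fun N => bangBound_of_ge hM hf hb ha N hax 0)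

theorem IsDenjoyCarleman.eq_zero (hM : IsDenjoyCarleman M)
    (hf : ∀ n x, HasDerivAt (f n) (f (n + 1) x) x) (hb : ∀ n x, ‖f n x‖ ≤ M n)
    (ha : ∀ n, f n a = 0) (x : ℝ) : f 0 x = 0 := by
  rcases le_total a x with hax | hxa
  · exact hM.eq_zero_of_ge hf hb ha hax
  · have hreflect (n : ℕ) (y : ℝ) : HasDerivAt (fun y => (-1 : ℝ) ^ n • f n (-y))
        ((-1 : ℝ) ^ (n + 1) • f (n + 1) (-y)) y := by
      rw [pow_succ, mul_smul]
      exact ((hf n (-y)).scomp y (hasDerivAt_neg y)).const_smul ((-1 : ℝ) ^ n)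
    simpa using hM.eq_zero_of_ge hreflect (fun n y => by simpa [norm_smul] using hb n (-y))
      (a := -a) (fun n => by simp [ha]) (neg_le_neg hxa)

end Bang

section WeightedCharFun

variable {Ω : Type*} [MeasurableSpace Ω] {μ ν : Measure Ω} {y : Ω → ℝ} {w : Ω → ℂ}

/-- The characteristic function of the real random variable `y` under the complex measure with
density `w` with respect to `μ`. -/
noncomputable def weightedCharFun (μ : Measure Ω) (y : Ω → ℝ) (w : Ω → ℂ) (t : ℝ) : ℂ :=
  ∫ ω, Complex.exp (t * y ω * Complex.I) * w ω ∂μ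

lemma norm_cexp_mul_mul_I_mul (t s : ℝ) (z : ℂ) :
    ‖Complex.exp (t * s * Complex.I) * z‖ = ‖z‖ := by
  rw [norm_mul, ← Complex.ofReal_mul, Complex.norm_exp_ofReal_mul_I, one_mul]

lemma weightedCharFun_zero : weightedCharFun μ y w 0 = ∫ ω, w ω ∂μ := by
  simp [weightedCharFun]

lemma norm_weightedCharFun_le (t : ℝ) : ‖weightedCharFun μ y w t‖ ≤ ∫ ω, ‖w ω‖ ∂μ := by
  simpa only [weightedCharFun, norm_cexp_mul_mul_I_mul] using norm_integral_le_integral_norm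
    (μ := μ) fun ω => Complex.exp (t * y ω * Complex.I) * w ω

lemma hasDerivAt_weightedCharFun (hy : Measurable y) (hw : Integrable w μ)
    (hyw : Integrable (fun ω => y ω * w ω) μ) (t : ℝ) :
    HasDerivAt (weightedCharFun μ y w)
      (Complex.I * weightedCharFun μ y (fun ω => y ω * w ω) t) t := by
  have hmeas (t : ℝ) {v : Ω → ℂ} (hv : Integrable v μ) :
      AEStronglyMeasurable (fun ω => Complex.exp (t * y ω * Complex.I) * v ω) μ :=
    (Measurable.aestronglyMeasurable (by fun_prop)).mul hv.aestronglyMeasurable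
  have hint : Integrable (fun ω => Complex.exp (t * y ω * Complex.I) * w ω) μ :=
    hw.mono (hmeas t hw) (.of_forall fun ω => (norm_cexp_mul_mul_I_mul ..).le)
  rw [weightedCharFun, ← integral_const_mul]
  refine (hasDerivAt_integral_of_dominated_loc_of_deriv_le univ_mem
    (.of_forall fun t => hmeas t hw) hint ((hmeas t hyw).const_mul _)
    (bound := fun ω => ‖y ω * w ω‖)
    (F' := fun s ω => Complex.I * (Complex.exp (s * y ω * Complex.I) * (y ω * w ω)))
    (.of_forall fun ω s _ => ?_) hyw.norm (.of_forall fun ω s _ => ?_)).2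
  · rw [norm_mul, Complex.norm_I, one_mul, norm_cexp_mul_mul_I_mul]
  · have hexponent : HasDerivAt (fun s : ℝ => (s : ℂ) * y ω * Complex.I) (y ω * Complex.I) s := by
      simpa using ((Complex.ofRealCLM.hasDerivAt (x := s)).mul_const (y ω : ℂ)).mul_const Complex.I
    exact (hexponent.cexp.mul_const (w ω)).congr_deriv (by ring)

lemma hasDerivAt_I_pow_mul_weightedCharFun (hy : Measurable y)
    (hw : ∀ n : ℕ, Integrable (fun ω => (y ω : ℂ) ^ n * w ω) μ) (n : ℕ) (t : ℝ) :
    HasDerivAt (fun t => Complex.I ^ n * weightedCharFun μ y (fun ω => (y ω : ℂ) ^ n * w ω) t)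
      (Complex.I ^ (n + 1) * weightedCharFun μ y (fun ω => (y ω : ℂ) ^ (n + 1) * w ω) t) t := by
  have hsucc : (fun ω => (y ω : ℂ) ^ (n + 1) * w ω) = fun ω => y ω * ((y ω : ℂ) ^ n * w ω) := by
    ext ω; ring
  rw [pow_succ, mul_assoc, hsucc]
  exact (hasDerivAt_weightedCharFun hy (hw n) (hsucc ▸ hw (n + 1)) t).const_mul _

theorem weightedCharFun_eq_of_integral_pow_mul_eq {M : ℕ → ℝ} (hM : IsDenjoyCarleman M)
    (hy : Measurable y) (hμ : ∀ n : ℕ, Integrable (fun ω => (y ω : ℂ) ^ n * w ω) μ)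
    (hν : ∀ n : ℕ, Integrable (fun ω => (y ω : ℂ) ^ n * w ω) ν)
    (hμν : ∀ n : ℕ, ∫ ω, (y ω : ℂ) ^ n * w ω ∂μ = ∫ ω, (y ω : ℂ) ^ n * w ω ∂ν)
    (hμM : ∀ n : ℕ, ∫ ω, ‖(y ω : ℂ) ^ n * w ω‖ ∂μ ≤ M n)
    (hνM : ∀ n : ℕ, ∫ ω, ‖(y ω : ℂ) ^ n * w ω‖ ∂ν ≤ M n) :
    weightedCharFun μ y w = weightedCharFun ν y w := by
  set φ : Measure Ω → ℕ → ℝ → ℂ := fun ρ n t =>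
    Complex.I ^ n * weightedCharFun ρ y (fun ω => (y ω : ℂ) ^ n * w ω) t
  have hbound (ρ : Measure Ω) (n : ℕ) (t : ℝ) :
      ‖φ ρ n t‖ ≤ ∫ ω, ‖(y ω : ℂ) ^ n * w ω‖ ∂ρ := by
    simpa [φ] using norm_weightedCharFun_le (μ := ρ) (y := y) (w := fun ω => (y ω : ℂ) ^ n * w ω) t
  ext t
  have hzero : φ μ 0 t - φ ν 0 t = 0 :=
    (hM.const_mul two_pos).eq_zero (f := fun n t => φ μ n t - φ ν n t) (a := 0)
      (fun n t => (hasDerivAt_I_pow_mul_weightedCharFun hy hμ n t).sub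
        (hasDerivAt_I_pow_mul_weightedCharFun hy hν n t))
      (fun n t => by
        linarith [norm_sub_le (φ μ n t) (φ ν n t), hbound μ n t, hbound ν n t, hμM n, hνM n])
      (fun n => by simp only [φ, weightedCharFun_zero, hμν n, sub_self]) t
  simpa [φ, sub_eq_zero] using hzero

end WeightedCharFun

lemma integral_abs_mul_le_sqrt_mul_sqrt {Ω : Type*} [MeasurableSpace Ω] {μ : Measure Ω}
    {f g : Ω → ℝ} (hf : MemLp f 2 μ) (hg : MemLp g 2 μ) :
    ∫ ω, |f ω * g ω| ∂μ ≤ √(∫ ω, f ω ^ 2 ∂μ) * √(∫ ω, g ω ^ 2 ∂μ) := by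
  have holder := integral_mul_norm_le_Lp_mul_Lq .two_two (by simpa using hf) (by simpa using hg)
  simpa [abs_mul, Real.sqrt_eq_rpow] using holder

namespace Carleman

variable {ν : Measure ℝ}

lemma integral_pow_sq_pos (hν : Carleman ν) (hint : ∀ n : ℕ, Integrable (fun t => t ^ n) ν)
    (n : ℕ) : 0 < ∫ t, (t ^ n) ^ 2 ∂ν := by
  refine (integral_nonneg fun t => sq_nonneg _).lt_of_ne fun h => hν ?_
  have hsq : Integrable (fun t : ℝ => (t ^ n) ^ 2) ν := by simpa only [← pow_mul] using hint _
  have hzero : ∀ᵐ t ∂ν, t = 0 := by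
    filter_upwards [(integral_eq_zero_iff_of_nonneg (fun t => sq_nonneg _) hsq).1 h.symm] with t ht
    exact eq_zero_of_pow_eq_zero (eq_zero_of_pow_eq_zero ht)
  refine summable_zero.congr fun m => ?_
  have hmoment : ∫ t, |t| ^ (2 * (m + 1)) ∂ν = 0 :=
    integral_eq_zero_of_ae (hzero.mono fun t ht => by simp [ht])
  rw [hmoment, Real.zero_rpow (neg_ne_zero.2 (by positivity))]

theorem isDenjoyCarleman (hν : Carleman ν) (hint : ∀ n : ℕ, Integrable (fun t => t ^ n) ν) :
    IsDenjoyCarleman fun n => √(∫ t, (t ^ n) ^ 2 ∂ν) where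
  pos n := Real.sqrt_pos.2 (hν.integral_pow_sq_pos hint n)
  sq_le_mul n := by
    have hmem (k : ℕ) : MemLp (fun t : ℝ => t ^ k) 2 ν :=
      (memLp_two_iff_integrable_sq (by fun_prop)).2 (by simpa only [← pow_mul] using hint _)
    have hmul (t : ℝ) : |t ^ n * t ^ (n + 2)| = (t ^ (n + 1)) ^ 2 := by
      rw [← abs_sq]; ring_nf
    rw [Real.sq_sqrt (hν.integral_pow_sq_pos hint _).le]
    simpa only [hmul] using integral_abs_mul_le_sqrt_mul_sqrt (hmem n) (hmem (n + 2))
  not_summable hs := hν <| by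
    refine (summable_rpow_neg_inv_of_summable_ratio
      (fun n => Real.sqrt_pos.2 (hν.integral_pow_sq_pos hint n)) hs).congr fun m => ?_
    have hmoment : ∫ t, |t| ^ (2 * (m + 1)) ∂ν = ∫ t, (t ^ (m + 1)) ^ 2 ∂ν := by
      simp only [mul_comm 2, pow_mul, ← abs_pow, abs_sq]
    rw [hmoment, Real.sqrt_eq_rpow, ← Real.rpow_mul (hν.integral_pow_sq_pos hint _).le]
    congr 1
    push_cast
    field_simp

end Carleman

section MixedMoments

variable {ι Ω : Type*} [MeasurableSpace Ω] {μ P Q : Measure Ω} {y : ι → Ω → ℝ}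

/-- The random vector `(y j)_j` has finite mixed moments of all orders under `μ`. The index type
may be infinite, so that orders are finitely supported multi-indices. -/
def HasMixedMoments (y : ι → Ω → ℝ) (μ : Measure Ω) : Prop :=
  ∀ α : ι →₀ ℕ, Integrable (fun ω => α.prod fun j k => y j ω ^ k) μ

/-- The mixed moments of all orders of the random vector `(y j)_j` are finite under both `P`
and `Q`, and agree. -/
structure SameMixedMoments (y : ι → Ω → ℝ) (P Q : Measure Ω) : Prop where
  left : HasMixedMoments y P
  right : HasMixedMoments y Q
  integral_eq : ∀ α : ι →₀ ℕ,
    ∫ ω, α.prod (fun j k => y j ω ^ k) ∂P = ∫ ω, α.prod (fun j k => y j ω ^ k) ∂Q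

lemma eval_eq_sum_coeff_mul_prod (x : ι → ℝ) (p : MvPolynomial ι ℝ) :
    MvPolynomial.eval x p = ∑ α ∈ p.support, p.coeff α * α.prod fun j k => x j ^ k :=
  MvPolynomial.eval_eq x p

namespace HasMixedMoments

lemma isFiniteMeasure (h : HasMixedMoments y μ) : IsFiniteMeasure μ := by
  simpa [integrable_const_iff, isFiniteMeasure_iff] using h 0

lemma integrable_eval (h : HasMixedMoments y μ) (p : MvPolynomial ι ℝ) :
    Integrable (fun ω => MvPolynomial.eval (y · ω) p) μ := by
  simp only [eval_eq_sum_coeff_mul_prod]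
  exact integrable_finsetSum _ fun α _ => (h α).const_mul _

lemma integrable_pow (h : HasMixedMoments y μ) (k : ι) (n : ℕ) :
    Integrable (fun ω => y k ω ^ n) μ := by
  simpa using h.integrable_eval (.X k ^ n)

lemma eval {κ : Type*} (h : HasMixedMoments y μ) (f : κ → MvPolynomial ι ℝ) :
    HasMixedMoments (fun k ω => MvPolynomial.eval (y · ω) (f k)) μ := fun α => by
  simpa only [map_finsuppProd, map_pow] using h.integrable_eval (α.prod fun k n => f k ^ n)

lemma memLp_two_eval (h : HasMixedMoments y μ) (p : MvPolynomial ι ℝ) :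
    MemLp (fun ω => MvPolynomial.eval (y · ω) p) 2 μ :=
  (memLp_two_iff_integrable_sq (h.integrable_eval p).aestronglyMeasurable).2 <| by
    simpa only [map_pow] using h.integrable_eval (p ^ (2 : ℕ))

lemma integral_abs_pow_mul_eval_le (h : HasMixedMoments y μ) (k : ι) (p : MvPolynomial ι ℝ)
    (n : ℕ) :
    ∫ ω, |y k ω ^ n * MvPolynomial.eval (y · ω) p| ∂μ ≤
      √(∫ ω, (y k ω ^ n) ^ 2 ∂μ) * √(∫ ω, MvPolynomial.eval (y · ω) p ^ 2 ∂μ) := by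
  simpa using integral_abs_mul_le_sqrt_mul_sqrt (h.memLp_two_eval (.X k ^ n)) (h.memLp_two_eval p)

lemma isDenjoyCarleman (h : HasMixedMoments y μ) {k : ι} (hy : Measurable (y k))
    (hcar : Carleman (μ.map (y k))) :
    IsDenjoyCarleman fun n => √(∫ ω, (y k ω ^ n) ^ 2 ∂μ) := by
  have hint (n : ℕ) : Integrable (fun t => t ^ n) (μ.map (y k)) :=
    (integrable_map_measure (by fun_prop) hy.aemeasurable).2 (h.integrable_pow k n)
  have hmap (n : ℕ) : ∫ t, (t ^ n) ^ 2 ∂μ.map (y k) = ∫ ω, (y k ω ^ n) ^ 2 ∂μ :=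
    integral_map hy.aemeasurable (by fun_prop)
  simpa only [hmap] using hcar.isDenjoyCarleman hint

end HasMixedMoments

namespace SameMixedMoments

lemma integral_eval_eq (h : SameMixedMoments y P Q) (p : MvPolynomial ι ℝ) :
    ∫ ω, MvPolynomial.eval (y · ω) p ∂P = ∫ ω, MvPolynomial.eval (y · ω) p ∂Q := by
  simp only [eval_eq_sum_coeff_mul_prod]
  rw [integral_finsetSum _ fun α _ => (h.left α).const_mul _,
    integral_finsetSum _ fun α _ => (h.right α).const_mul _]
  simp only [integral_const_mul, h.integral_eq]

lemma eval {κ : Type*} (h : SameMixedMoments y P Q) (f : κ → MvPolynomial ι ℝ) :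
    SameMixedMoments (fun k ω => MvPolynomial.eval (y · ω) (f k)) P Q where
  left := h.left.eval f
  right := h.right.eval f
  integral_eq α := by
    simpa only [map_finsuppProd, map_pow] using h.integral_eval_eq (α.prod fun k n => f k ^ n)

lemma inner [Fintype ι] {κ : Type*} {P Q : Measure (EuclideanSpace ℝ ι)}
    (h : SameMixedMoments (fun i x => x i) P Q) (u : κ → EuclideanSpace ℝ ι) :
    SameMixedMoments (fun k x => ⟪u k, x⟫_ℝ) P Q := by
  have hinner (k : κ) (x : EuclideanSpace ℝ ι) :
      MvPolynomial.eval (fun i => x i) (∑ i, .C (u k i) * .X i) = ⟪u k, x⟫_ℝ := by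
    simp [PiLp.inner_apply, mul_comm]
  simpa only [hinner] using h.eval fun k => ∑ i, .C (u k i) * .X i

lemma weightedCharFun_mul_eval_eq (h : SameMixedMoments y P Q) {k : ι} (hy : Measurable (y k))
    (hcar : Carleman (P.map (y k))) {g : Ω → ℂ} (hg : Measurable g) (hg₁ : ∀ ω, ‖g ω‖ = 1)
    (hPQ : ∀ p : MvPolynomial ι ℝ, ∫ ω, g ω * (MvPolynomial.eval (y · ω) p : ℝ) ∂P =
      ∫ ω, g ω * (MvPolynomial.eval (y · ω) p : ℝ) ∂Q) (p : MvPolynomial ι ℝ) :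
    weightedCharFun P (y k) (fun ω => g ω * (MvPolynomial.eval (y · ω) p : ℝ)) =
      weightedCharFun Q (y k) (fun ω => g ω * (MvPolynomial.eval (y · ω) p : ℝ)) := by
  have hmul (n : ℕ) (ω : Ω) : (y k ω : ℂ) ^ n * (g ω * (MvPolynomial.eval (y · ω) p : ℝ)) =
      g ω * (MvPolynomial.eval (y · ω) (.X k ^ n * p) : ℝ) := by
    rw [map_mul, map_pow, MvPolynomial.eval_X]
    push_cast
    ring
  have hint {μ : Measure Ω} (hμ : HasMixedMoments y μ) (q : MvPolynomial ι ℝ) :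
      Integrable (fun ω => g ω * (MvPolynomial.eval (y · ω) q : ℝ)) μ :=
    (hμ.integrable_eval q).ofReal.bdd_mul hg.aestronglyMeasurable (.of_forall fun ω => (hg₁ ω).le)
  have hnorm (n : ℕ) (ω : Ω) : ‖(y k ω : ℂ) ^ n * (g ω * (MvPolynomial.eval (y · ω) p : ℝ))‖ =
      |y k ω ^ n * MvPolynomial.eval (y · ω) p| := by
    simp [hg₁]
  have hsq (q : MvPolynomial ι ℝ) :
      ∫ ω, MvPolynomial.eval (y · ω) q ^ 2 ∂Q = ∫ ω, MvPolynomial.eval (y · ω) q ^ 2 ∂P := by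
    simpa only [map_pow] using (h.integral_eval_eq (q ^ (2 : ℕ))).symm
  have hpow (n : ℕ) : ∫ ω, (y k ω ^ n) ^ 2 ∂Q = ∫ ω, (y k ω ^ n) ^ 2 ∂P := by
    simpa only [map_pow, MvPolynomial.eval_X] using hsq (.X k ^ n)
  set C := √(∫ ω, MvPolynomial.eval (y · ω) p ^ 2 ∂P)
  have hC (n : ℕ) : √(∫ ω, (y k ω ^ n) ^ 2 ∂P) * C ≤ (C + 1) * √(∫ ω, (y k ω ^ n) ^ 2 ∂P) := by
    linarith [Real.sqrt_nonneg (∫ ω, (y k ω ^ n) ^ 2 ∂P)]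
  refine weightedCharFun_eq_of_integral_pow_mul_eq
    ((h.left.isDenjoyCarleman hy hcar).const_mul (c := C + 1) (by positivity)) hy
    (fun n => ?_) (fun n => ?_) (fun n => ?_) (fun n => ?_) (fun n => ?_)
  · simpa only [hmul] using hint h.left _
  · simpa only [hmul] using hint h.right _
  · simpa only [hmul] using hPQ _
  · simpa only [hnorm] using (h.left.integral_abs_pow_mul_eval_le k p n).trans (hC n)
  · have hQ := h.right.integral_abs_pow_mul_eval_le k p n
    rw [hpow, hsq] at hQ
    simpa only [hnorm] using hQ.trans (hC n)

theorem integral_cexp_mul_eval_eq (h : SameMixedMoments y P Q) (hy : ∀ j, Measurable (y j))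
    (hcar : ∀ j, Carleman (P.map (y j))) (t : ι → ℝ) (S : Finset ι) (p : MvPolynomial ι ℝ) :
    ∫ ω, Complex.exp ((∑ j ∈ S, t j * y j ω : ℝ) * Complex.I) *
        (MvPolynomial.eval (y · ω) p : ℝ) ∂P =
      ∫ ω, Complex.exp ((∑ j ∈ S, t j * y j ω : ℝ) * Complex.I) *
        (MvPolynomial.eval (y · ω) p : ℝ) ∂Q := by
  classical
  induction S using Finset.induction_on generalizing p with
  | empty => simpa [integral_complex_ofReal] using h.integral_eval_eq p
  | insert k S hk ih =>
    have hsplit (ω : Ω) : Complex.exp ((∑ j ∈ insert k S, t j * y j ω : ℝ) * Complex.I) =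
        Complex.exp (t k * y k ω * Complex.I) *
          Complex.exp ((∑ j ∈ S, t j * y j ω : ℝ) * Complex.I) := by
      rw [Finset.sum_insert hk, ← Complex.exp_add]
      push_cast
      ring_nf
    simp only [hsplit, mul_assoc (Complex.exp _)]
    exact congrFun (h.weightedCharFun_mul_eval_eq (hy k) (hcar k)
      (by fun_prop) (fun ω => Complex.norm_exp_ofReal_mul_I _) ih p) (t k)

lemma map_eq_of_finite [Finite ι] (h : SameMixedMoments y P Q) (hy : ∀ j, Measurable (y j))
    (hcar : ∀ j, Carleman (P.map (y j))) :
    P.map (fun ω j => y j ω) = Q.map (fun ω j => y j ω) := by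
  classical
  have := Fintype.ofFinite ι
  have := h.left.isFiniteMeasure
  have := h.right.isFiniteMeasure
  have hmeas : Measurable fun ω j => y j ω := measurable_pi_lambda _ hy
  refine Measure.ext_of_charFunDual (funext fun L => ?_)
  have hL (ω : Ω) :
      L (fun j => y j ω) = ∑ j, L (fun i => if j = i then 1 else 0) * y j ω := by
    simpa [mul_comm] using L.toLinearMap.pi_apply_eq_sum_univ fun j => y j ω
  have hcharFun := h.integral_cexp_mul_eval_eq hy hcar
    (fun j => L fun i => if j = i then 1 else 0) Finset.univ 1
  rw [charFunDual_apply, charFunDual_apply, integral_map hmeas.aemeasurable (by fun_prop),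
    integral_map hmeas.aemeasurable (by fun_prop)]
  simpa only [hL, map_one, Complex.ofReal_one, mul_one] using hcharFun

theorem map_eq (h : SameMixedMoments y P Q) (hy : ∀ j, Measurable (y j))
    (hcar : ∀ j, Carleman (P.map (y j))) :
    P.map (fun ω j => y j ω) = Q.map (fun ω j => y j ω) := by
  have := h.left.isFiniteMeasure
  have hproj (μ : Measure Ω) : IsProjectiveLimit (μ.map fun ω j => y j ω)
      (fun S : Finset ι => μ.map fun ω (j : S) => y j ω) := fun S =>
    Measure.map_map (Finset.measurable_restrict S) (measurable_pi_lambda _ hy)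
  have hfinite (S : Finset ι) :
      P.map (fun ω (j : S) => y j ω) = Q.map fun ω (j : S) => y j ω := by
    have hS : SameMixedMoments (fun j : S => y j) P Q := by
      simpa only [MvPolynomial.eval_X] using h.eval fun j : S => .X (j : ι)
    exact hS.map_eq_of_finite (fun j => hy j) fun j => hcar j
  exact (hproj P).unique fun S => (hproj Q S).trans (hfinite S).symm

end SameMixedMoments

lemma hasMixedMoments_of_integrable_prod_abs [Fintype ι] (hy : ∀ j, Measurable (y j))
    (h : ∀ α : ι → ℕ, Integrable (fun ω => ∏ j, |y j ω| ^ α j) μ) : HasMixedMoments y μ := by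
  intro α
  simp only [Finsupp.prod_fintype _ _ fun _ => pow_zero _]
  exact (h α).mono (by fun_prop) (.of_forall fun ω => by simp)

lemma sameMixedMoments_of_fintype [Fintype ι] (hy : ∀ j, Measurable (y j))
    (hP : ∀ α : ι → ℕ, Integrable (fun ω => ∏ j, |y j ω| ^ α j) P)
    (hQ : ∀ α : ι → ℕ, Integrable (fun ω => ∏ j, |y j ω| ^ α j) Q)
    (hPQ : ∀ α : ι → ℕ, ∫ ω, ∏ j, y j ω ^ α j ∂P = ∫ ω, ∏ j, y j ω ^ α j ∂Q) :
    SameMixedMoments y P Q where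
  left := hasMixedMoments_of_integrable_prod_abs hy hP
  right := hasMixedMoments_of_integrable_prod_abs hy hQ
  integral_eq α := by simpa only [Finsupp.prod_fintype _ _ fun _ => pow_zero _] using hPQ α

end MixedMoments

lemma injective_inner_of_dense_span {𝕜 E ι : Type*} [RCLike 𝕜] [NormedAddCommGroup E]
    [InnerProductSpace 𝕜 E] {u : ι → E} (hu : Dense (Submodule.span 𝕜 (Set.range u) : Set E)) :
    Function.Injective fun x j => inner 𝕜 (u j) x := by
  intro x x' h
  refine (InnerProductSpace.toDualMap 𝕜 E).injective (ContinuousLinearMap.ext_on hu ?_)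
  rintro _ ⟨j, rfl⟩
  simpa only [InnerProductSpace.toDualMap_apply_apply, inner_conj_symm] using
    congrArg (starRingEnd 𝕜) (congrFun h j)

theorem stmt19_general {ι Ω : Type*} [Countable ι] [MeasurableSpace Ω] [StandardBorelSpace Ω]
    {P Q : Measure Ω} {y : ι → Ω → ℝ} (hy : ∀ j, Measurable (y j))
    (hinj : Function.Injective fun ω j => y j ω) (hmom : SameMixedMoments y P Q)
    (hcar : ∀ j, Carleman (P.map (y j))) : P = Q :=
  ((measurable_pi_lambda _ hy).measurableEmbedding hinj).map_injective (hmom.map_eq hy hcar)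

theorem stmt19 (d : ℕ) (P Q : Measure (EuclideanSpace ℝ (Fin d)))
    [IsProbabilityMeasure P] [IsProbabilityMeasure Q]
    (hPint : ∀ α : Fin d → ℕ, Integrable (fun x => ∏ i, |x i| ^ α i) P)
    (hQint : ∀ α : Fin d → ℕ, Integrable (fun x => ∏ i, |x i| ^ α i) Q)
    (hmom : ∀ α : Fin d → ℕ,
      (∫ x, ∏ i, x i ^ α i ∂P) = ∫ x, ∏ i, x i ^ α i ∂Q)
    (u : Fin d → EuclideanSpace ℝ (Fin d)) (hu : LinearIndependent ℝ u)
    (hint : ∀ j, ∀ m : ℕ,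
      Integrable (fun t => |t| ^ m) (P.map (fun x => ⟪u j, x⟫_ℝ)))
    (hcar : ∀ j, Carleman (P.map (fun x => ⟪u j, x⟫_ℝ))) :
    P = Q :=
  have hspan : Submodule.span ℝ (Set.range u) = ⊤ :=
    hu.span_eq_top_of_card_eq_finrank' (by simp)
  have hcoord := sameMixedMoments_of_fintype (fun i => by fun_prop) hPint hQint hmom
  stmt19_general (fun j => by fun_prop) (injective_inner_of_dense_span (by simp [hspan]))
    (hcoord.inner u) hcar
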